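/- arXiv:math/9905016 — 2 statements merged into one kernel-verified Lean document; each statement's English description precedes it below -/
import Mathlib

section
/- Assume the Open Colouring Axiom (OCA). Then there is no Boolean-algebra embedding (injective Boolean homomorphism) of the measure algebra ℳ into P(ℕ)/fin. -/
open Set MeasureTheory
open scoped ENNReal

namespace Paper

/-- The Open Colouring Axiom: for every separable metrizable space `X` and every
partition `[X]² = K₀ ∪ K₁` of the unordered pairs with `K₀` open (coded here as a
symmetric open set `K ⊆ X × X` off the diagonal), either there is an uncountable
`K₀`-homogeneous set, or `X` is a countable union of `K₁`-homogeneous sets. -/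
def OCA : Prop :=
  ∀ (X : Type) [MetricSpace X] [TopologicalSpace.SeparableSpace X],
    ∀ K : Set (X × X), IsOpen K → (∀ a b : X, (a, b) ∈ K → (b, a) ∈ K) →
      (∀ a : X, (a, a) ∉ K) →
      (∃ Y : Set X, ¬Y.Countable ∧ ∀ a ∈ Y, ∀ b ∈ Y, a ≠ b → (a, b) ∈ K) ∨
      (∃ Y : ℕ → Set X, (⋃ n, Y n) = Set.univ ∧
        ∀ (n : ℕ), ∀ a ∈ Y n, ∀ b ∈ Y n, a ≠ b → (a, b) ∉ K)

/-- `X` and `Y` agree modulo a finite set. -/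
def AlmostEq {α : Type} (X Y : Set α) : Prop := (symmDiff X Y).Finite

/-- the "equal mod finite" setoid on `Set α` -/
def finSetoid (α : Type) : Setoid (Set α) where
  r X Y := (symmDiff X Y).Finite
  iseqv := by
    constructor
    · intro X; simp
    · intro X Y h; rwa [symmDiff_comm]
    · intro X Y Z h1 h2
      exact (h1.union h2).subset (symmDiff_triangle X Y Z)

/-- the quotient Boolean algebra `P(α)/fin` -/
def PFin (α : Type) : Type := Quotient (finSetoid α)

/-- the class of `X` in `P(α)/fin` -/
def PFin.mk {α : Type} (X : Set α) : PFin α := Quotient.mk (finSetoid α) X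

/-- join in `P(α)/fin` -/
def PFin.sup {α : Type} : PFin α → PFin α → PFin α :=
  Quotient.lift₂ (fun X Y => PFin.mk (X ∪ Y))
    (by
      intro X Y X' Y' hX hY
      refine Quotient.sound ?_
      have hX' : (symmDiff X X').Finite := hX
      have hY' : (symmDiff Y Y').Finite := hY
      show (symmDiff (X ∪ Y) (X' ∪ Y')).Finite
      refine (hX'.union hY').subset ?_
      intro x hx
      simp only [Set.mem_symmDiff, Set.mem_union] at hx ⊢
      tauto)

/-- meet in `P(α)/fin` -/
def PFin.inf {α : Type} : PFin α → PFin α → PFin α :=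
  Quotient.lift₂ (fun X Y => PFin.mk (X ∩ Y))
    (by
      intro X Y X' Y' hX hY
      refine Quotient.sound ?_
      have hX' : (symmDiff X X').Finite := hX
      have hY' : (symmDiff Y Y').Finite := hY
      show (symmDiff (X ∩ Y) (X' ∩ Y')).Finite
      refine (hX'.union hY').subset ?_
      intro x hx
      simp only [Set.mem_symmDiff, Set.mem_inter_iff, Set.mem_union] at hx ⊢
      tauto)

/-- complement in `P(α)/fin` -/
def PFin.compl {α : Type} : PFin α → PFin α :=
  Quotient.lift (fun X => PFin.mk Xᶜ)
    (by
      intro X Y h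
      refine Quotient.sound ?_
      have h' : (symmDiff X Y).Finite := h
      show (symmDiff Xᶜ Yᶜ).Finite
      have e : symmDiff Xᶜ Yᶜ = symmDiff X Y := by
        ext x; simp only [Set.mem_symmDiff, Set.mem_compl_iff]; tauto
      rw [e]; exact h')

/-- bottom of `P(α)/fin` -/
def PFin.bot {α : Type} : PFin α := PFin.mk (∅ : Set α)

/-- top of `P(α)/fin` -/
def PFin.top {α : Type} : PFin α := PFin.mk (Set.univ : Set α)

/-- the Cantor set `2^ω` -/
abbrev Cant : Type := ℕ → Bool

/-- the space `C = ω × 2^ω` -/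
abbrev CSp : Type := ℕ × Cant

/-- the cylinder set `[s] = {x : s ⊂ x}` determined by a finite binary sequence -/
def cyl (s : List Bool) : Set Cant := {x | ∀ i : Fin s.length, x i.1 = s.get i}

/-- the basic clopen set `{n} × [s]` of `C` -/
def basic (n : ℕ) (s : List Bool) : Set CSp := {n} ×ˢ cyl s

lemma measurableSet_cyl (s : List Bool) : MeasurableSet (cyl s) := by
  have h : cyl s = ⋂ i : Fin s.length, (fun x : Cant => x i.1) ⁻¹' {s.get i} := by
    ext x; simp [cyl]
  rw [h]
  exact MeasurableSet.iInter fun i => (measurable_pi_apply i.1) (measurableSet_singleton _)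

lemma measurableSet_basic (n : ℕ) (s : List Bool) : MeasurableSet (basic n s) :=
  (measurableSet_singleton n).prod (measurableSet_cyl s)

/-- a measure on `C` is the right one when it gives each basic set `{n} × [s]`
measure `2^{-|s|}` (this determines the measure on all Borel sets). -/
def IsMeasureOK (μ : Measure CSp) : Prop :=
  ∀ (n : ℕ) (s : List Bool), μ (basic n s) = (2 : ℝ≥0∞)⁻¹ ^ s.length

/-- Borel subsets of `C` -/
abbrev BSet : Type := {A : Set CSp // MeasurableSet A}

/-- the "equal modulo a null set" setoid on Borel sets of `C` -/
def measSetoid (μ : Measure CSp) : Setoid BSet where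
  r A B := μ (symmDiff (A : Set CSp) (B : Set CSp)) = 0
  iseqv := by
    constructor
    · intro A; simp
    · intro A B h; rwa [symmDiff_comm]
    · intro A B C h1 h2
      exact measure_mono_null (symmDiff_triangle (A : Set CSp) (B : Set CSp) (C : Set CSp))
        (measure_union_null h1 h2)

/-- the measure algebra `ℳ = Bor(C)/𝒩` -/
def MAlg (μ : Measure CSp) : Type := Quotient (measSetoid μ)

/-- the class of a Borel set in the measure algebra -/
def MAlg.mk (μ : Measure CSp) (A : BSet) : MAlg μ := Quotient.mk (measSetoid μ) A

variable {μ : Measure CSp}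

/-- join in the measure algebra -/
def MAlg.sup : MAlg μ → MAlg μ → MAlg μ :=
  Quotient.lift₂ (fun A B : BSet => MAlg.mk μ ⟨(A : Set CSp) ∪ (B : Set CSp), A.2.union B.2⟩)
    (by
      intro A B A' B' hA hB
      refine Quotient.sound ?_
      have hA' : μ (symmDiff (A : Set CSp) (A' : Set CSp)) = 0 := hA
      have hB' : μ (symmDiff (B : Set CSp) (B' : Set CSp)) = 0 := hB
      show μ (symmDiff ((A : Set CSp) ∪ (B : Set CSp)) ((A' : Set CSp) ∪ (B' : Set CSp))) = 0
      refine measure_mono_null ?_ (measure_union_null hA' hB')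
      intro x hx
      simp only [Set.mem_symmDiff, Set.mem_union] at hx ⊢
      tauto)

/-- meet in the measure algebra -/
def MAlg.inf : MAlg μ → MAlg μ → MAlg μ :=
  Quotient.lift₂ (fun A B : BSet => MAlg.mk μ ⟨(A : Set CSp) ∩ (B : Set CSp), A.2.inter B.2⟩)
    (by
      intro A B A' B' hA hB
      refine Quotient.sound ?_
      have hA' : μ (symmDiff (A : Set CSp) (A' : Set CSp)) = 0 := hA
      have hB' : μ (symmDiff (B : Set CSp) (B' : Set CSp)) = 0 := hB
      show μ (symmDiff ((A : Set CSp) ∩ (B : Set CSp)) ((A' : Set CSp) ∩ (B' : Set CSp))) = 0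
      refine measure_mono_null ?_ (measure_union_null hA' hB')
      intro x hx
      simp only [Set.mem_symmDiff, Set.mem_inter_iff, Set.mem_union] at hx ⊢
      tauto)

/-- complement in the measure algebra -/
def MAlg.compl : MAlg μ → MAlg μ :=
  Quotient.lift (fun A : BSet => MAlg.mk μ ⟨(A : Set CSp)ᶜ, A.2.compl⟩)
    (by
      intro A B h
      refine Quotient.sound ?_
      have h' : μ (symmDiff (A : Set CSp) (B : Set CSp)) = 0 := h
      show μ (symmDiff (A : Set CSp)ᶜ (B : Set CSp)ᶜ) = 0
      have e : symmDiff (A : Set CSp)ᶜ (B : Set CSp)ᶜ = symmDiff (A : Set CSp) (B : Set CSp) := by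
        ext x; simp only [Set.mem_symmDiff, Set.mem_compl_iff]; tauto
      rw [e]; exact h')

/-- bottom of the measure algebra -/
def MAlg.bot : MAlg μ := MAlg.mk μ ⟨∅, MeasurableSet.empty⟩

/-- top of the measure algebra -/
def MAlg.top : MAlg μ := MAlg.mk μ ⟨Set.univ, MeasurableSet.univ⟩

/-- `φ : ℳ → P(ℕ)/fin` is a Boolean-algebra embedding -/
structure IsEmbedding (μ : Measure CSp) (φ : MAlg μ → PFin ℕ) : Prop where
  injective : Function.Injective φ
  map_sup : ∀ a b, φ (MAlg.sup a b) = PFin.sup (φ a) (φ b)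
  map_inf : ∀ a b, φ (MAlg.inf a b) = PFin.inf (φ a) (φ b)
  map_compl : ∀ a, φ (MAlg.compl a) = PFin.compl (φ a)
  map_bot : φ MAlg.bot = PFin.bot
  map_top : φ MAlg.top = PFin.top

/-! Choose representatives `A S ⊆ ℕ` for the values of an embedding, so that `A` is additive up to
finite sets and `A S` is infinite when `S` has positive measure. For a branch `x` of the binary
tree and a sequence `P` of clopen sets, let `branchSet x P` be the open set with section `P k`
over the `k`-th node of `x`. Two pairs `(x, P)` and `(y, Q)` conflict when `P` and `Q` agree on
the nodes common to `x` and `y` but `A (branchSet x P)` and `A (branchSet y Q)` are incompatible.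
The sets of a pairwise conflicting family glue to one open set `U`, and `A U` determines each of
their values up to a finite set, so such a family is countable. Hence, by OCA, countably many
conflict-free pieces cover all pairs. The sets of sequences near which a piece fails to decide
`n ∈ A (branchSet x P)` are disjoint for distinct `x`, so for all but countably many `x` they are
nowhere dense. Fixing such an `x`, the space of sequences is residually covered by countably many
sets `Y i` on each of which every condition `n ∈ A (branchSet x P)` is clopen.

This is impossible. After localization to basic open sets there are countably many pairs of some
`Y i` and some `n`; for each, consider the sequences near which all of `Y i` satisfies the `n`-th
condition. If some of them have very small sections, put one of these below a fixed sequence `O`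
of sets of measure less than `1`. The complement of `O` is sent to an infinite set, so Baire
category and the additivity of `A` give an `n` in it for which the joins `V ⊔ W₁ ⊔ W₂` with `V`
below `O` satisfy the `n`-th condition exactly when `W₁` or `W₂` does. The sequences near which
the condition fails then form an ideal, and every sequence below `O` is a limit of members of this
ideal. Some sequence is not in the ideal; cutting it by a fine clopen partition gives a sequence
with small sections near which the condition holds, so there is also one below `O`, a
contradiction. -/

open Filter PiNat TopologicalSpace
open scoped Set.Notation Topology

section RelativeClosure

variable {α : Type*} [TopologicalSpace α] {Y Z a : Set α}

theorem notMem_closure_sdiff_of_isOpen (ha : IsOpen (Y ↓∩ a)) {x : α} (hxY : x ∈ Y) (hxa : x ∈ a) :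
    x ∉ closure (Y \ a) := by
  obtain ⟨U, hU, hUa⟩ := isOpen_induced_iff.1 ha
  have mem_iff (y : α) (hy : y ∈ Y) : y ∈ U ↔ y ∈ a := Set.ext_iff.1 hUa ⟨y, hy⟩
  intro hx
  obtain ⟨y, hyU, hyY, hya⟩ := mem_closure_iff.1 hx U hU ((mem_iff x hxY).2 hxa)
  exact hya ((mem_iff y hyY).1 hyU)

theorem notMem_closure_inter_of_isClosed (ha : IsClosed (Y ↓∩ a)) {x : α} (hxY : x ∈ Y)
    (hxa : x ∉ a) : x ∉ closure (Y ∩ a) := by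
  simpa only [sdiff_compl] using notMem_closure_sdiff_of_isOpen (a := aᶜ) ha.isOpen_compl hxY hxa

theorem isClopen_preimage_of_disjoint_frontier (hZY : Z ⊆ Y)
    (hZ : Disjoint Z (closure (Y ∩ a) ∩ closure (Y \ a))) : IsClopen (Z ↓∩ a) := by
  have mem_left {y : α} (hy : y ∈ Z) (hya : y ∈ a) : y ∈ closure (Y ∩ a) :=
    subset_closure ⟨hZY hy, hya⟩
  have mem_right {y : α} (hy : y ∈ Z) (hya : y ∉ a) : y ∈ closure (Y \ a) :=
    subset_closure ⟨hZY hy, hya⟩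
  have h_closed : Z ↓∩ a = Z ↓∩ closure (Y ∩ a) := by
    ext ⟨y, hy⟩
    exact ⟨mem_left hy, fun h => by_contra fun hya => disjoint_left.1 hZ hy ⟨h, mem_right hy hya⟩⟩
  have h_open : Z ↓∩ a = Z ↓∩ (closure (Y \ a))ᶜ := by
    ext ⟨y, hy⟩
    exact ⟨fun hya h => disjoint_left.1 hZ hy ⟨mem_left hy hya, h⟩,
      fun h => by_contra fun hya => h (mem_right hy hya)⟩
  exact ⟨h_closed ▸ isClosed_closure.preimage continuous_subtype_val,
    h_open ▸ isClosed_closure.isOpen_compl.preimage continuous_subtype_val⟩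

end RelativeClosure

section SequenceSpaces

variable {E F : ℕ → Type*} {l L : ℕ}

/-- The sequence `u` with its first `l` terms replaced by `s`. Preimages under `graft s` localize
subsets of a sequence space to the basic open set given by `s`, without changing the space. -/
def graft (s : ∀ i : Fin l, E i) (u : ∀ k, E k) : ∀ k, E k :=
  fun k => if h : k < l then s ⟨k, h⟩ else u k

theorem graft_of_lt (s : ∀ i : Fin l, E i) (u : ∀ k, E k) {k : ℕ} (h : k < l) :
    graft s u k = s ⟨k, h⟩ :=
  dif_pos h

theorem graft_of_le (s : ∀ i : Fin l, E i) (u : ∀ k, E k) {k : ℕ} (h : l ≤ k) :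
    graft s u k = u k :=
  dif_neg h.not_gt

theorem graft_restrict_mem_cylinder (x y : ∀ k, E k) :
    graft (fun i : Fin l => x i) y ∈ cylinder x l :=
  fun _ hk => graft_of_lt _ _ hk

theorem graft_map (f : ∀ k, E k → F k) (s : ∀ i : Fin l, E i) (u : ∀ k, E k) :
    Pi.map f (graft s u) = graft (fun i => f i (s i)) (Pi.map f u) := by
  funext k
  by_cases hk : k < l <;> simp [graft, hk]

variable [∀ k, TopologicalSpace (E k)]

theorem continuous_graft (s : ∀ i : Fin l, E i) : Continuous (graft s) := by
  refine continuous_pi fun k => ?_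
  rcases lt_or_ge k l with hk | hk
  · simp only [graft_of_lt _ _ hk, continuous_const]
  · simp only [graft_of_le _ _ hk, continuous_apply]

variable [∀ k, DiscreteTopology (E k)]

theorem mem_closure_iff_cylinder {Z : Set (∀ k, E k)} {x : ∀ k, E k} :
    x ∈ closure Z ↔ ∀ L, ∃ y ∈ Z, y ∈ cylinder x L := by
  refine (isTopologicalBasis_cylinders E).mem_closure_iff.trans ⟨fun h L => ?_, fun h => ?_⟩
  · obtain ⟨y, hy, hyZ⟩ := h _ ⟨x, L, rfl⟩ (self_mem_cylinder x L)
    exact ⟨y, hyZ, hy⟩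
  · rintro _ ⟨z, L, rfl⟩ hx
    obtain ⟨y, hyZ, hy⟩ := h L
    exact ⟨y, mem_cylinder_iff_eq.1 hx ▸ hy, hyZ⟩

theorem notMem_closure_iff_cylinder {Z : Set (∀ k, E k)} {x : ∀ k, E k} :
    x ∉ closure Z ↔ ∃ L, ∀ y ∈ cylinder x L, y ∉ Z := by
  rw [mem_closure_iff_cylinder]
  push Not
  exact exists_congr fun L => forall_congr' fun y => imp_not_comm

theorem isOpenMap_graft (s : ∀ i : Fin l, E i) : IsOpenMap (graft s) := by
  refine IsOpenMap.piMap (f := fun k x => if h : k < l then s ⟨k, h⟩ else x)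
    (fun _ _ _ => isOpen_discrete _) ?_
  rw [Nat.cofinite_eq_atTop]
  filter_upwards [eventually_ge_atTop l] with k hk x
  exact ⟨x, dif_neg hk.not_gt⟩

theorem exists_dense_graft_preimage [∀ k, Nonempty (E k)] {ι : Type*} [Countable ι]
    {Z : ι → Set (∀ k, E k)} (hZ : ∀ᶠ x in residual (∀ k, E k), ∃ i, x ∈ Z i) :
    ∃ i l, ∃ s : ∀ k : Fin l, E k, Dense (graft s ⁻¹' Z i) := by
  obtain ⟨i, hi⟩ : ∃ i, ¬ IsMeagre (Z i) := by
    by_contra! h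
    refine not_isMeagre_of_mem_residual hZ ((isMeagre_iUnion h).mono fun x hx => ?_)
    exact mem_iUnion.2 hx
  obtain ⟨x, hx⟩ : (interior (closure (Z i))).Nonempty :=
    nonempty_iff_ne_empty.2 fun h => hi (IsNowhereDense.isMeagre h)
  obtain ⟨_, ⟨z, l, rfl⟩, -, hz⟩ :=
    (isTopologicalBasis_cylinders E).exists_subset_of_mem_open hx isOpen_interior
  refine ⟨i, l, fun k => z k, fun y => ?_⟩
  have hy : graft (fun k : Fin l => z k) y ∈ closure (Z i) :=
    interior_subset (hz (graft_restrict_mem_cylinder z y))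
  exact (isOpenMap_graft _).preimage_closure_subset_closure_preimage hy

theorem tendsto_residual_piMap [∀ k, TopologicalSpace (F k)] [∀ k, DiscreteTopology (F k)]
    {f : ∀ k, E k → F k} (hf : ∀ k, Function.Surjective (f k)) :
    Tendsto (Pi.map f) (residual (∀ k, E k)) (residual (∀ k, F k)) :=
  tendsto_residual_of_isOpenMap (Continuous.piMap fun _ => continuous_of_discreteTopology)
    (IsOpenMap.piMap (fun _ _ _ => isOpen_discrete _) (.of_forall hf))

end SequenceSpaces

section DenseAmalgam

variable {B : Type*}

/-- A generic triple `(V, W₁, W₂)`, with `V` near a prescribed member of `𝒱`, has `Wᵢ ∈ Yᵢ` and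
`V ⊔ W₁ ⊔ W₂ ∈ Y`, and membership of the join in `a` is decided by `W₁ ∈ a₁` and `W₂ ∈ a₂` alone.
This is what the Baire category theorem extracts from a lifting which is nearly additive. -/
def DenseAmalgam [Max B] (𝒱 Y Y₁ Y₂ a a₁ a₂ : Set (ℕ → B)) : Prop :=
  ∀ L, ∀ V' ∈ 𝒱, ∀ W₁' W₂', ∃ V ∈ cylinder V' L,
    ∃ W₁ ∈ Y₁ ∩ cylinder W₁' L, ∃ W₂ ∈ Y₂ ∩ cylinder W₂' L,
      V ⊔ W₁ ⊔ W₂ ∈ Y ∧ (V ⊔ W₁ ⊔ W₂ ∈ a ↔ W₁ ∈ a₁ ∨ W₂ ∈ a₂)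

theorem sup_mem_cylinder [Max B] {x x' y y' : ℕ → B} {L : ℕ} (hx : x' ∈ cylinder x L)
    (hy : y' ∈ cylinder y L) : x' ⊔ y' ∈ cylinder (x ⊔ y) L :=
  fun k hk => congrArg₂ (· ⊔ ·) (hx k hk) (hy k hk)

namespace DenseAmalgam

variable {𝒱 Y Y₁ Y₂ a a₁ a₂ : Set (ℕ → B)}

theorem swap [SemilatticeSup B] (h : DenseAmalgam 𝒱 Y Y₁ Y₂ a a₁ a₂) :
    DenseAmalgam 𝒱 Y Y₂ Y₁ a a₂ a₁ := by
  intro L V' hV' W₂' W₁'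
  obtain ⟨V, hV, W₁, hW₁, W₂, hW₂, hY, ha⟩ := h L V' hV' W₁' W₂'
  rw [sup_right_comm] at hY ha
  exact ⟨V, hV, W₂, hW₂, W₁, hW₁, hY, ha.trans or_comm⟩

variable [TopologicalSpace B] [DiscreteTopology B]

theorem dense_left [SemilatticeSup B] (h : DenseAmalgam 𝒱 Y Y₁ Y₂ a a₁ a₂) (h𝒱 : 𝒱.Nonempty) :
    Dense Y₁ := by
  obtain ⟨V', hV'⟩ := h𝒱
  refine fun w => mem_closure_iff_cylinder.2 fun L => ?_
  obtain ⟨-, -, W₁, ⟨hY₁, hW₁⟩, -⟩ := h L V' hV' w w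
  exact ⟨W₁, hY₁, hW₁⟩

theorem dense_right [SemilatticeSup B] (h : DenseAmalgam 𝒱 Y Y₁ Y₂ a a₁ a₂) (h𝒱 : 𝒱.Nonempty) :
    Dense Y₂ :=
  h.swap.dense_left h𝒱

theorem dense [SemilatticeSup B] [OrderBot B] (h : DenseAmalgam 𝒱 Y Y₁ Y₂ a a₁ a₂) (h𝒱 : ⊥ ∈ 𝒱) :
    Dense Y := by
  refine fun u => mem_closure_iff_cylinder.2 fun L => ?_
  obtain ⟨V, hV, W₁, ⟨-, hW₁⟩, W₂, ⟨-, hW₂⟩, hY, -⟩ := h L ⊥ h𝒱 u u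
  refine ⟨_, hY, ?_⟩
  simpa using sup_mem_cylinder (sup_mem_cylinder hV hW₁) hW₂

theorem mem_closure_of_left_le [SemilatticeSup B] [OrderBot B]
    (h : DenseAmalgam 𝒱 Y Y₁ Y₂ a a₁ a₂) (h𝒱 : ⊥ ∈ 𝒱) (ha₁ : IsOpen (Y₁ ↓∩ a₁)) {w u : ℕ → B}
    (hw : w ∈ closure (Y₁ ∩ a₁)) (hwu : w ≤ u) : u ∈ closure (Y ∩ a) := by
  refine mem_closure_iff_cylinder.2 fun L => ?_
  obtain ⟨Q, ⟨hQY, hQa⟩, hQw⟩ := mem_closure_iff_cylinder.1 hw L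
  obtain ⟨l, hl⟩ := notMem_closure_iff_cylinder.1 (notMem_closure_sdiff_of_isOpen ha₁ hQY hQa)
  obtain ⟨V, hV, W₁, ⟨hY₁, hW₁⟩, W₂, ⟨-, hW₂⟩, hY, ha⟩ := h (max L l) ⊥ h𝒱 Q u
  have hW₁a : W₁ ∈ a₁ := by
    by_contra hW₁a
    exact hl W₁ (cylinder_anti _ (le_max_right L l) hW₁) ⟨hY₁, hW₁a⟩
  refine ⟨_, ⟨hY, ha.2 (.inl hW₁a)⟩, ?_⟩
  have hL := le_max_left L l
  have hW₁w : W₁ ∈ cylinder w L := mem_cylinder_iff_eq.1 hQw ▸ cylinder_anti _ hL hW₁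
  have := sup_mem_cylinder (sup_mem_cylinder (cylinder_anti _ hL hV) hW₁w) (cylinder_anti _ hL hW₂)
  rwa [bot_sup_eq, sup_eq_right.2 hwu] at this

theorem mem_closure_of_right_le [SemilatticeSup B] [OrderBot B]
    (h : DenseAmalgam 𝒱 Y Y₁ Y₂ a a₁ a₂) (h𝒱 : ⊥ ∈ 𝒱) (ha₂ : IsOpen (Y₂ ↓∩ a₂)) {w u : ℕ → B}
    (hw : w ∈ closure (Y₂ ∩ a₂)) (hwu : w ≤ u) : u ∈ closure (Y ∩ a) :=
  h.swap.mem_closure_of_left_le h𝒱 ha₂ hw hwu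

theorem mem_closure_or_of_sup_mem_closure [SemilatticeSup B] [OrderBot B]
    (h : DenseAmalgam 𝒱 Y Y₁ Y₂ a a₁ a₂) (h𝒱 : ⊥ ∈ 𝒱) (ha : IsOpen (Y ↓∩ a)) {u₁ u₂ : ℕ → B}
    (hu : u₁ ⊔ u₂ ∈ closure (Y ∩ a)) : u₁ ∈ closure (Y₁ ∩ a₁) ∨ u₂ ∈ closure (Y₂ ∩ a₂) := by
  by_contra! ⟨h₁, h₂⟩
  obtain ⟨L₁, hL₁⟩ := notMem_closure_iff_cylinder.1 h₁
  obtain ⟨L₂, hL₂⟩ := notMem_closure_iff_cylinder.1 h₂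
  set L := max L₁ L₂
  obtain ⟨Q, ⟨hQY, hQa⟩, hQ⟩ := mem_closure_iff_cylinder.1 hu L
  obtain ⟨l, hl⟩ := notMem_closure_iff_cylinder.1 (notMem_closure_sdiff_of_isOpen ha hQY hQa)
  have h_join : graft (fun i : Fin L => u₁ i) Q ⊔ graft (fun i : Fin L => u₂ i) Q = Q := by
    funext k
    rcases lt_or_ge k L with hk | hk
    · simp only [Pi.sup_apply, graft_of_lt _ _ hk, hQ k hk]
    · simp only [Pi.sup_apply, graft_of_le _ _ hk, sup_idem]
  obtain ⟨V, hV, W₁, ⟨hY₁, hW₁⟩, W₂, ⟨hY₂, hW₂⟩, hY, hVW⟩ := h (max L l) ⊥ h𝒱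
    (graft (fun i : Fin L => u₁ i) Q) (graft (fun i : Fin L => u₂ i) Q)
  have mem_a : V ⊔ W₁ ⊔ W₂ ∈ a := by
    by_contra hVWa
    have hVWQ := sup_mem_cylinder (sup_mem_cylinder hV hW₁) hW₂
    rw [bot_sup_eq, h_join] at hVWQ
    exact hl _ (cylinder_anti _ (le_max_right L l) hVWQ) ⟨hY, hVWa⟩
  have mem_cylinder {u W : ℕ → B} {M : ℕ} (hM : M ≤ L)
      (hW : W ∈ cylinder (graft (fun i : Fin L => u i) Q) (max L l)) : W ∈ cylinder u M := by
    refine cylinder_anti u hM ?_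
    rw [← mem_cylinder_iff_eq.1 (graft_restrict_mem_cylinder u Q)]
    exact cylinder_anti _ (le_max_left L l) hW
  exact (hVW.1 mem_a).elim (fun hW₁a => hL₁ W₁ (mem_cylinder (le_max_left _ _) hW₁) ⟨hY₁, hW₁a⟩)
    fun hW₂a => hL₂ W₂ (mem_cylinder (le_max_right _ _) hW₂) ⟨hY₂, hW₂a⟩

/-- The sequences outside `closure (Y ∩ a)`, near which no member of `Y` lies in `a`, form an
ideal. -/
theorem mem_closure_or_of_le_sup [DistribLattice B] [OrderBot B]
    (h : DenseAmalgam 𝒱 Y Y₁ Y₂ a a₁ a₂) (h𝒱 : ⊥ ∈ 𝒱) (ha : IsOpen (Y ↓∩ a))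
    (ha₁ : IsOpen (Y₁ ↓∩ a₁)) (ha₂ : IsOpen (Y₂ ↓∩ a₂)) {w u₁ u₂ : ℕ → B}
    (hw : w ∈ closure (Y ∩ a)) (hle : w ≤ u₁ ⊔ u₂) :
    u₁ ∈ closure (Y ∩ a) ∨ u₂ ∈ closure (Y ∩ a) := by
  rw [← inf_eq_left.2 hle, inf_sup_left] at hw
  exact (h.mem_closure_or_of_sup_mem_closure h𝒱 ha hw).imp
    (h.mem_closure_of_left_le h𝒱 ha₁ · inf_le_right)
    (h.mem_closure_of_right_le h𝒱 ha₂ · inf_le_right)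

theorem exists_inf_notMem_closure_sdiff [DistribLattice B] [BoundedOrder B] {S : Type*} [Fintype S]
    [Nonempty S] (h : DenseAmalgam 𝒱 Y Y₁ Y₂ a a₁ a₂) (h𝒱 : ⊥ ∈ 𝒱) (ha : IsClopen (Y ↓∩ a))
    (ha₁ : IsOpen (Y₁ ↓∩ a₁)) (ha₂ : IsOpen (Y₂ ↓∩ a₂)) {U : ℕ → B} (hUY : U ∈ Y) (hUa : U ∈ a)
    {p : S → B} (hp : Finset.univ.sup p = ⊤) : ∃ s, (fun k => U k ⊓ p s) ∉ closure (Y \ a) := by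
  by_contra! hs
  obtain ⟨l, hl⟩ := notMem_closure_iff_cylinder.1 (notMem_closure_sdiff_of_isOpen ha.isOpen hUY hUa)
  choose P hPY hPU using fun s => mem_closure_iff_cylinder.1 (hs s) l
  have hP (s : S) : P s ∉ closure (Y ∩ a) :=
    notMem_closure_inter_of_isClosed ha.isClosed (hPY s).1 (hPY s).2
  have h_sup : Finset.univ.sup P ∉ closure (Y ∩ a) := by
    rw [← Finset.sup'_eq_sup Finset.univ_nonempty]
    refine Finset.sup'_induction (p := (· ∉ closure (Y ∩ a))) _ _
      (fun u₁ h₁ u₂ h₂ hu => ?_) fun s _ => hP s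
    exact (h.mem_closure_or_of_le_sup h𝒱 ha.isOpen ha₁ ha₂ hu le_rfl).elim h₁ h₂
  have h_sup_cylinder : Finset.univ.sup P ∈ cylinder U l := by
    intro k hk
    rw [Finset.sup_apply, Finset.sup_congr rfl fun s _ => hPU s k hk, ← Finset.sup_inf_distrib_left,
      hp, inf_top_eq]
  refine h_sup (closure_mono ?_
    ((h.dense h𝒱).open_subset_closure_inter (isOpen_cylinder _ U l) h_sup_cylinder))
  exact fun y ⟨hyU, hyY⟩ => ⟨hyY, by_contra fun hya => hl y hyU ⟨hyY, hya⟩⟩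

theorem mem_closure_sdiff [DistribLattice B] [OrderBot B]
    (h : DenseAmalgam 𝒱 Y Y₁ Y₂ a a₁ a₂) (h𝒱 : ⊥ ∈ 𝒱) (ha : IsClopen (Y ↓∩ a))
    (ha₁ : IsClopen (Y₁ ↓∩ a₁)) (ha₂ : IsClopen (Y₂ ↓∩ a₂)) {P₁ P₂ r : ℕ → B}
    (hP₁ : P₁ ∈ Y₁ \ a₁) (hP₂ : P₂ ∈ Y₂ \ a₂) (hr : r ∈ 𝒱) : r ∈ closure (Y \ a) := by
  refine mem_closure_iff_cylinder.2 fun L => ?_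
  obtain ⟨l₁, hl₁⟩ :=
    notMem_closure_iff_cylinder.1 (notMem_closure_inter_of_isClosed ha₁.isClosed hP₁.1 hP₁.2)
  obtain ⟨l₂, hl₂⟩ :=
    notMem_closure_iff_cylinder.1 (notMem_closure_inter_of_isClosed ha₂.isClosed hP₂.1 hP₂.2)
  obtain ⟨V, hV, W₁, ⟨hY₁, hW₁⟩, W₂, ⟨hY₂, hW₂⟩, hY, hVW⟩ := h (max L (max l₁ l₂)) r hr P₁ P₂
  set T := V ⊔ W₁ ⊔ W₂
  have hTa : T ∉ a := fun hT => (hVW.1 hT).elim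
    (fun hW₁a => hl₁ W₁ (cylinder_anti _ (by simp) hW₁) ⟨hY₁, hW₁a⟩)
    fun hW₂a => hl₂ W₂ (cylinder_anti _ (by simp) hW₂) ⟨hY₂, hW₂a⟩
  have hrT : r ⊓ T ∈ cylinder r L := by
    intro k hk
    have hVr : V k = r k := hV k (hk.trans_le (le_max_left _ _))
    exact inf_eq_left.2 (hVr ▸ le_sup_left.trans le_sup_left : r k ≤ T k)
  have not_mem : r ⊓ T ∉ closure (Y ∩ a) := fun hmem =>
    notMem_closure_inter_of_isClosed ha.isClosed hY hTa <| or_self_iff.1 <|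
      h.mem_closure_or_of_le_sup h𝒱 ha.isOpen ha₁.isOpen ha₂.isOpen hmem (by simp)
  have hmem : r ⊓ T ∈ closure (Y ∩ a) ∪ closure (Y \ a) := by
    rw [← closure_union, inter_union_sdiff]
    exact h.dense h𝒱 _
  obtain ⟨y, hy, hyr⟩ := mem_closure_iff_cylinder.1 (hmem.resolve_left not_mem) L
  exact ⟨y, hy, mem_cylinder_iff_eq.1 hrT ▸ hyr⟩

end DenseAmalgam

theorem exists_denseAmalgam [SemilatticeSup B] [OrderBot B] [TopologicalSpace B]
    [DiscreteTopology B] {ι : Type*} [Countable ι] {Y : ι → Set (ℕ → B)}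
    (hY : ∀ᶠ P in residual (ℕ → B), ∃ i, P ∈ Y i) {𝒪 : ℕ → Set B} (h𝒪 : ∀ k, ⊥ ∈ 𝒪 k)
    {a : ℕ → Set (ℕ → B)} {N : Set ℕ}
    (ha : ∀ V ∈ univ.pi 𝒪, ∀ W₁ W₂, ∀ᶠ n in atTop, n ∈ N →
      (V ⊔ W₁ ⊔ W₂ ∈ a n ↔ W₁ ∈ a n ∨ W₂ ∈ a n)) :
    ∃ i j₁ j₂ m l, ∃ t w₁ w₂ : Fin l → B, ∀ n ≥ m, n ∈ N →
      DenseAmalgam (univ.pi 𝒪) (graft t ⁻¹' Y i) (graft w₁ ⁻¹' Y j₁) (graft w₂ ⁻¹' Y j₂)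
        (graft t ⁻¹' a n) (graft w₁ ⁻¹' a n) (graft w₂ ⁻¹' a n) := by
  let D (k : ℕ) : Type _ := 𝒪 k × B × B
  let v (k : ℕ) (d : D k) : B := d.1
  let w₁ (k : ℕ) (d : D k) : B := d.2.1
  let w₂ (k : ℕ) (d : D k) : B := d.2.2
  let t (k : ℕ) (d : D k) : B := v k d ⊔ w₁ k d ⊔ w₂ k d
  have w₁_surjective (k : ℕ) : Function.Surjective (w₁ k) := fun b => ⟨(⟨⊥, h𝒪 k⟩, b, b), rfl⟩
  have w₂_surjective (k : ℕ) : Function.Surjective (w₂ k) := fun b => ⟨(⟨⊥, h𝒪 k⟩, b, b), rfl⟩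
  have t_surjective (k : ℕ) : Function.Surjective (t k) :=
    fun b => ⟨(⟨⊥, h𝒪 k⟩, b, b), by simp [t, v, w₁, w₂]⟩
  let Z : ι × ι × ι × ℕ → Set (∀ k, D k) := fun (i, j₁, j₂, m) =>
    {x | Pi.map t x ∈ Y i ∧ Pi.map w₁ x ∈ Y j₁ ∧ Pi.map w₂ x ∈ Y j₂ ∧ ∀ n ≥ m, n ∈ N →
      (Pi.map t x ∈ a n ↔ Pi.map w₁ x ∈ a n ∨ Pi.map w₂ x ∈ a n)}
  have hZ : ∀ᶠ x in residual (∀ k, D k), ∃ q, x ∈ Z q := by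
    filter_upwards [(tendsto_residual_piMap t_surjective).eventually hY,
      (tendsto_residual_piMap w₁_surjective).eventually hY,
      (tendsto_residual_piMap w₂_surjective).eventually hY] with x ⟨i, hi⟩ ⟨j₁, hj₁⟩ ⟨j₂, hj₂⟩
    obtain ⟨m, hm⟩ := eventually_atTop.1 <|
      ha (Pi.map v x) (fun k _ => (x k).1.2) (Pi.map w₁ x) (Pi.map w₂ x)
    exact ⟨(i, j₁, j₂, m), hi, hj₁, hj₂, hm⟩
  have (k : ℕ) : Nonempty (D k) := ⟨(⟨⊥, h𝒪 k⟩, ⊥, ⊥)⟩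
  obtain ⟨⟨i, j₁, j₂, m⟩, l, s, hs⟩ := exists_dense_graft_preimage hZ
  refine ⟨i, j₁, j₂, m, l, fun k => t k (s k), fun k => w₁ k (s k), fun k => w₂ k (s k),
    fun n hn hnN L V' hV' W₁' W₂' => ?_⟩
  obtain ⟨z, hz, hzL⟩ := mem_closure_iff_cylinder.1
    (hs fun k => (⟨V' k, hV' k trivial⟩, W₁' k, W₂' k)) L
  simp only [Z, mem_preimage, mem_ofPred_eq, graft_map] at hz
  obtain ⟨hzt, hzw₁, hzw₂, hza⟩ := hz
  exact ⟨Pi.map v z, fun k hk => congrArg (v k) (hzL k hk),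
    Pi.map w₁ z, ⟨hzw₁, fun k hk => congrArg (w₁ k) (hzL k hk)⟩,
    Pi.map w₂ z, ⟨hzw₂, fun k hk => congrArg (w₂ k) (hzL k hk)⟩, hzt, hza n hn hnN⟩

end DenseAmalgam

section Liftings

variable {α : Type*} [MeasurableSpace α]

/-- `A` chooses representatives in `P(ℕ)` for an embedding of the measure algebra of `μ` into
`P(ℕ)/fin`. The Boolean operations are preserved up to finite sets, and a set of positive measure
is sent to an infinite set. -/
structure IsLifting (μ : Measure α) (A : Set α → Set ℕ) : Prop where
  union : ∀ ⦃S T⦄, MeasurableSet S → MeasurableSet T →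
    ∀ᶠ n in atTop, n ∈ A (S ∪ T) ↔ n ∈ A S ∨ n ∈ A T
  inter : ∀ ⦃S T⦄, MeasurableSet S → MeasurableSet T →
    ∀ᶠ n in atTop, n ∈ A (S ∩ T) ↔ n ∈ A S ∧ n ∈ A T
  empty : ∀ᶠ n in atTop, n ∉ A ∅
  frequently_mem : ∀ ⦃S⦄, MeasurableSet S → μ S ≠ 0 → ∃ᶠ n in atTop, n ∈ A S

namespace IsLifting

variable {μ : Measure α} {A : Set α → Set ℕ} {S T : Set α}

theorem eventually_notMem_of_disjoint (hA : IsLifting μ A) (hS : MeasurableSet S)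
    (hT : MeasurableSet T) (hST : Disjoint S T) : ∀ᶠ n in atTop, n ∈ A S → n ∉ A T := by
  filter_upwards [hA.inter hS hT, hA.empty] with n h_inter h_empty hnS hnT
  rw [hST.inter_eq] at h_inter
  exact h_empty (h_inter.2 ⟨hnS, hnT⟩)

theorem eventually_mem_of_subset (hA : IsLifting μ A) (hS : MeasurableSet S)
    (hT : MeasurableSet T) (hST : S ⊆ T) : ∀ᶠ n in atTop, n ∈ A S → n ∈ A T := by
  filter_upwards [hA.inter hS hT] with n h_inter hnS
  rw [inter_eq_left.2 hST] at h_inter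
  exact (h_inter.1 hnS).2

end IsLifting

theorem PFin.eventually_mem_iff_of_mk_eq {X Y : Set ℕ} (h : PFin.mk X = PFin.mk Y) :
    ∀ᶠ n in atTop, n ∈ X ↔ n ∈ Y := by
  have h_fin : (symmDiff X Y).Finite := Quotient.exact h
  rw [← Nat.cofinite_eq_atTop]
  filter_upwards [h_fin.eventually_cofinite_notMem] with n hn
  rw [mem_symmDiff] at hn
  tauto

theorem PFin.mk_eq_bot_of_finite {X : Set ℕ} (hX : X.Finite) : PFin.mk X = PFin.bot :=
  Quotient.sound ((symmDiff_bot X).symm ▸ hX : (symmDiff X ∅).Finite)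

theorem IsEmbedding.exists_isLifting {μ : Measure CSp} {φ : MAlg μ → PFin ℕ}
    (hφ : IsEmbedding μ φ) : ∃ A, IsLifting μ A := by
  classical
  choose rep hrep using fun a : PFin ℕ => Quotient.exists_rep a
  let A (S : Set CSp) : Set ℕ := if hS : MeasurableSet S then rep (φ (MAlg.mk μ ⟨S, hS⟩)) else ∅
  have mk_A {S : Set CSp} (hS : MeasurableSet S) : PFin.mk (A S) = φ (MAlg.mk μ ⟨S, hS⟩) := by
    simp only [A, hS, dif_pos]
    exact hrep _
  refine ⟨A, fun S T hS hT => ?_, fun S T hS hT => ?_, ?_, fun S hS hμS => ?_⟩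
  · refine PFin.eventually_mem_iff_of_mk_eq (Y := A S ∪ A T) ((mk_A (hS.union hT)).trans ?_)
    refine (hφ.map_sup (MAlg.mk μ ⟨S, hS⟩) (MAlg.mk μ ⟨T, hT⟩)).trans ?_
    rw [← mk_A hS, ← mk_A hT]
    rfl
  · refine PFin.eventually_mem_iff_of_mk_eq (Y := A S ∩ A T) ((mk_A (hS.inter hT)).trans ?_)
    refine (hφ.map_inf (MAlg.mk μ ⟨S, hS⟩) (MAlg.mk μ ⟨T, hT⟩)).trans ?_
    rw [← mk_A hS, ← mk_A hT]
    rfl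
  · filter_upwards [PFin.eventually_mem_iff_of_mk_eq ((mk_A .empty).trans hφ.map_bot)] with n hn
    exact hn.not.2 (notMem_empty n)
  · rw [Nat.frequently_atTop_iff_infinite]
    intro h_fin
    have hφS : φ (MAlg.mk μ ⟨S, hS⟩) = φ MAlg.bot := by
      rw [hφ.map_bot, ← mk_A hS, PFin.mk_eq_bot_of_finite (X := A S) h_fin]
    have h_null : μ (symmDiff S ∅) = 0 := Quotient.exact (hφ.injective hφS)
    exact hμS (by rwa [← bot_eq_empty, symmDiff_bot] at h_null)

end Liftings

section Columns

variable {ι γ β : Type*} {c : ι → γ} {P Q : ι → Set β}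

/-- The subset of `γ × β` whose section over `c k` is `P k`. -/
def columns (c : ι → γ) (P : ι → Set β) : Set (γ × β) :=
  ⋃ k, {c k} ×ˢ P k

theorem mem_columns {x : γ × β} : x ∈ columns c P ↔ ∃ k, x.1 = c k ∧ x.2 ∈ P k := by
  simp only [columns, mem_iUnion, mem_prod, mem_singleton_iff]

theorem columns_mono (h : ∀ k, P k ⊆ Q k) : columns c P ⊆ columns c Q :=
  iUnion_mono fun k => prod_mono_right (h k)

theorem columns_union (c : ι → γ) (P Q : ι → Set β) :
    columns c (fun k => P k ∪ Q k) = columns c P ∪ columns c Q := by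
  simp only [columns, prod_union, iUnion_union_distrib]

theorem prod_subset_columns {S : Set β} {k : ι} (h : S ⊆ P k) : {c k} ×ˢ S ⊆ columns c P :=
  (prod_mono_right h).trans (subset_iUnion (fun k => {c k} ×ˢ P k) k)

theorem disjoint_columns (hc : Function.Injective c) (h : ∀ k, Disjoint (P k) (Q k)) :
    Disjoint (columns c P) (columns c Q) := by
  refine disjoint_left.2 fun x hxP hxQ => ?_
  obtain ⟨k, hk, hkP⟩ := mem_columns.1 hxP
  obtain ⟨k', hk', hkQ⟩ := mem_columns.1 hxQ
  obtain rfl := hc (hk.symm.trans hk')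
  exact disjoint_left.1 (h k) hkP hkQ

theorem disjoint_prod_columns (hc : Function.Injective c) {S : Set β} {k : ι}
    (h : Disjoint S (P k)) : Disjoint ({c k} ×ˢ S) (columns c P) := by
  refine disjoint_left.2 fun x hxS hxP => ?_
  obtain ⟨k', hk', hkP⟩ := mem_columns.1 hxP
  obtain rfl := hc (hxS.1.symm.trans hk')
  exact disjoint_left.1 h hxS.2 hkP

variable [MeasurableSpace γ] [MeasurableSpace β]

theorem measurableSet_columns [Countable ι] [MeasurableSingletonClass γ]
    (hP : ∀ k, MeasurableSet (P k)) : MeasurableSet (columns c P) :=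
  .iUnion fun k => (measurableSet_singleton _).prod (hP k)

theorem measurableSet_columns_clopens [Countable ι] [MeasurableSingletonClass γ]
    [TopologicalSpace β] [OpensMeasurableSpace β] (c : ι → γ) (P : ι → Clopens β) :
    MeasurableSet (columns c fun k => (P k : Set β)) :=
  measurableSet_columns fun k => (P k).isOpen.measurableSet

/-- The measure `S ↦ μ ({n} × S)`. -/
noncomputable def columnMeasure (μ : Measure (γ × β)) (n : γ) : Measure β :=
  μ.comap (Prod.mk n)

theorem columnMeasure_apply [MeasurableSingletonClass γ] (μ : Measure (γ × β)) (n : γ) (S : Set β) :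
    columnMeasure μ n S = μ ({n} ×ˢ S) := by
  rw [columnMeasure, (measurableEmbedding_prodMk_left n).comap_apply, singleton_prod]

end Columns

section Absorption

variable {ι κ ρ β : Type*} [Countable ι] [MeasurableSpace β]

/-- Only one member of each `𝒢 i` has to be absorbed, so the union `O` of these countably many
small members stays small. -/
theorem exists_absorbing_sets (ν : κ → Measure β) {f : ρ → κ → Set β}
    (hf : ∀ r k, MeasurableSet (f r k)) (𝒢 : ι → Set ρ) {δ : ℝ≥0∞} (hδ : δ ≠ 0) :
    ∃ ε : ι → ℝ≥0∞, (∀ i, 0 < ε i) ∧ ∃ O : κ → Set β,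
      (∀ k, MeasurableSet (O k)) ∧ (∀ k, ν k (O k) < δ) ∧
        ∀ i, (∃ r ∈ 𝒢 i, ∀ k, ν k (f r k) ≤ ε i) → ∃ r ∈ 𝒢 i, ∀ k, f r k ⊆ O k := by
  obtain ⟨ε, hε, hε_sum⟩ := ENNReal.exists_pos_sum_of_countable' hδ ι
  refine ⟨ε, hε, ?_⟩
  choose r hr hrε using fun i : {i // ∃ r ∈ 𝒢 i, ∀ k, ν k (f r k) ≤ ε i} => i.2
  refine ⟨fun k => ⋃ i, f (r i) k, fun k => .iUnion fun i => hf _ k, fun k => ?_,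
    fun i hi => ⟨r ⟨i, hi⟩, hr ⟨i, hi⟩, fun k => subset_iUnion (fun i => f (r i) k) ⟨i, hi⟩⟩⟩
  calc ν k (⋃ i, f (r i) k) ≤ ∑' i, ν k (f (r i) k) := measure_iUnion_le _
    _ ≤ ∑' i : {i // ∃ r ∈ 𝒢 i, ∀ k, ν k (f r k) ≤ ε i}, ε i :=
        ENNReal.tsum_le_tsum fun i => hrε i k
    _ ≤ ∑' i, ε i := ENNReal.tsum_comp_le_tsum_of_injective Subtype.val_injective ε
    _ < δ := hε_sum

end Absorption

section CantorColumns

theorem isClopen_cyl (s : List Bool) : IsClopen (cyl s) := by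
  have h : cyl s = ⋂ i : Fin s.length, (fun x : Cant => x i.1) ⁻¹' {s.get i} := by
    ext x
    simp [cyl]
  rw [h]
  exact isClopen_iInter_of_finite fun i => (isClopen_discrete _).preimage (continuous_apply i.1)

variable {μ : Measure CSp}

theorem IsMeasureOK.columnMeasure_univ (hμ : IsMeasureOK μ) (n : ℕ) :
    columnMeasure μ n univ = 1 := by
  have h : cyl [] = univ := eq_univ_of_forall fun x i => i.elim0
  rw [columnMeasure_apply, ← h]
  exact (hμ n []).trans (pow_zero _)

theorem IsMeasureOK.exists_fine_clopen_cover (hμ : IsMeasureOK μ) {ε : ℝ≥0∞} (hε : 0 < ε) :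
    ∃ N, ∃ p : (Fin N → Bool) → Clopens Cant, Finset.univ.sup p = ⊤ ∧
      ∀ s n, columnMeasure μ n (p s) ≤ ε := by
  obtain ⟨N, hN⟩ := ENNReal.exists_inv_two_pow_lt hε.ne'
  let p (s : Fin N → Bool) : Clopens Cant := ⟨cyl (List.ofFn s), isClopen_cyl _⟩
  refine ⟨N, p, top_unique fun x _ => ?_, fun s n => ?_⟩
  · have hx : x ∈ p fun i => x i := fun i => by simp
    exact Finset.le_sup (f := p) (Finset.mem_univ _) hx
  · rw [columnMeasure_apply]
    exact ((hμ n _).trans (by rw [List.length_ofFn])).trans_le hN.le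

end CantorColumns

section OpenColouring

theorem OCA.exists_iUnion_pairwise_not (oca : OCA) {Z E : Type} [Countable E] {e : Z → ℕ → E}
    (he : Function.Injective e) {K : Z → Z → Prop} (hK_symm : ∀ a b, K a b → K b a)
    (hK_irrefl : ∀ a, ¬ K a a)
    (hK_open : ∀ a b, K a b → ∃ M, ∀ a' b', e a' ∈ cylinder (e a) M → e b' ∈ cylinder (e b) M →
      K a' b')
    (hK : ∀ Y : Set Z, Y.Pairwise K → Y.Countable) :
    ∃ X : ℕ → Set Z, (⋃ i, X i) = univ ∧ ∀ i, (X i).Pairwise fun a b => ¬ K a b := by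
  let _ : TopologicalSpace E := ⊥
  have : DiscreteTopology E := ⟨rfl⟩
  let _ : MetricSpace (ℕ → E) := metrizableSpaceMetric (ℕ → E)
  let _ : MetricSpace Z := MetricSpace.induced e he inferInstance
  have : SecondCountableTopology Z := secondCountableTopology_induced Z (ℕ → E) e
  have cylinder_mem_nhds (M : ℕ) (z : Z) : e ⁻¹' cylinder (e z) M ∈ 𝓝 z :=
    ((isOpen_cylinder _ (e z) M).preimage continuous_induced_dom).mem_nhds (self_mem_cylinder _ M)
  have h_open : IsOpen {p : Z × Z | K p.1 p.2} := by
    refine isOpen_iff_mem_nhds.2 fun ⟨a, b⟩ hab => ?_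
    obtain ⟨M, hM⟩ := hK_open a b hab
    filter_upwards [prod_mem_nhds (cylinder_mem_nhds M a) (cylinder_mem_nhds M b)]
      with ⟨a', b'⟩ ⟨ha', hb'⟩ using hM a' b' ha' hb'
  obtain ⟨Y, hY, hYK⟩ | ⟨X, hX, hXK⟩ := oca Z {p | K p.1 p.2} h_open hK_symm hK_irrefl
  · exact absurd (hK Y hYK) hY
  · exact ⟨X, hX, hXK⟩

/-- Two indices whose exceptional finite sets and traces on them agree would satisfy
`a i ∩ b j = a j ∩ b i`, and there are only countably many such finite data. -/
theorem countable_of_eventually_mem_iff {ι : Type*} {a b : ι → Set ℕ} {u : Set ℕ}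
    (h : ∀ i, ∀ᶠ n in atTop, n ∈ a i ↔ n ∈ u ∧ n ∈ b i)
    (h_ne : Pairwise fun i j => a i ∩ b j ≠ a j ∩ b i) : Countable ι := by
  classical
  choose m hm using fun i => eventually_atTop.1 (h i)
  let g (i : ι) : ℕ × Finset ℕ × Finset ℕ :=
    (m i, {n ∈ Finset.range (m i) | n ∈ a i}, {n ∈ Finset.range (m i) | n ∈ b i})
  refine Function.Injective.countable (f := g) fun i j hij => not_not.1 fun hne => h_ne hne ?_
  simp only [g, Prod.mk.injEq, Finset.ext_iff, Finset.mem_filter, Finset.mem_range] at hij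
  obtain ⟨hm_eq, ha, hb⟩ := hij
  ext n
  rcases lt_or_ge n (m i) with hn | hn
  · have han : n ∈ a i ↔ n ∈ a j := by simpa [hn, hm_eq ▸ hn] using ha n
    have hbn : n ∈ b i ↔ n ∈ b j := by simpa [hn, hm_eq ▸ hn] using hb n
    rw [mem_inter_iff, mem_inter_iff, han, hbn]
  · rw [mem_inter_iff, mem_inter_iff, hm i n hn, hm j n (hm_eq ▸ hn)]
    tauto

/-- The `k`-th node of the branch `x` of the binary tree, coded as a natural number. Distinct
branches share only finitely many nodes. -/
def branchNode (x : Cant) (k : ℕ) : ℕ :=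
  Encodable.encode (res x k)

theorem branchNode_eq_branchNode_iff {x y : Cant} {k k' : ℕ} :
    branchNode x k = branchNode y k' ↔ k = k' ∧ y ∈ cylinder x k := by
  rw [branchNode, branchNode, Encodable.encode_inj, cylinder_eq_res]
  refine ⟨fun h => ?_, fun ⟨hk, h⟩ => hk ▸ h.symm⟩
  have hk : k = k' := by simpa using congrArg List.length h
  subst hk
  exact ⟨rfl, h.symm⟩

theorem branchNode_injective (x : Cant) : Function.Injective (branchNode x) :=
  fun _ _ h => (branchNode_eq_branchNode_iff.1 h).1

variable {β : Type} [TopologicalSpace β]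

/-- The open set whose section over the `k`-th node of the branch `x` is `P k`. -/
def branchSet (x : Cant) (P : ℕ → Clopens β) : Set (ℕ × β) :=
  columns (branchNode x) fun k => P k

theorem isOpen_branchSet (x : Cant) (P : ℕ → Clopens β) : IsOpen (branchSet x P) :=
  isOpen_iUnion fun k => (isOpen_discrete _).prod (P k).isOpen

theorem branchSet_subset_top (x : Cant) (P : ℕ → Clopens β) : branchSet x P ⊆ branchSet x ⊤ :=
  columns_mono fun _ => subset_univ _

/-- The sequences `z.2` and `z'.2` prescribe the same sections over the common nodes of the branches
`z.1` and `z'.1`, although the values of `A` are incompatible. A family of pairs without such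
conflicts is uniformized by a single set when `A` is a lifting. -/
def Conflict (A : Set (ℕ × β) → Set ℕ) (z z' : Cant × (ℕ → Clopens β)) : Prop :=
  z.1 ≠ z'.1 ∧ z'.2 ∈ cylinder z.2 (firstDiff z.1 z'.1 + 1) ∧
    A (branchSet z.1 z.2) ∩ A (branchSet z'.1 ⊤) ≠ A (branchSet z'.1 z'.2) ∩ A (branchSet z.1 ⊤)

theorem Conflict.symm {A : Set (ℕ × β) → Set ℕ} {z z' : Cant × (ℕ → Clopens β)}
    (h : Conflict A z z') : Conflict A z' z :=
  ⟨h.1.symm, firstDiff_comm z.1 z'.1 ▸ (mem_cylinder_comm _ _ _).1 h.2.1, h.2.2.symm⟩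

/-- The data of `z` on which the relation `Conflict A` depends, as a sequence. For the topology
induced by this coding the relation is open. -/
def conflictCode (A : Set (ℕ × β) → Set ℕ) (z : Cant × (ℕ → Clopens β)) (n : ℕ) :
    Bool × Clopens β × Prop × Prop :=
  (z.1 n, z.2 n, n ∈ A (branchSet z.1 z.2), n ∈ A (branchSet z.1 ⊤))

theorem conflictCode_injective (A : Set (ℕ × β) → Set ℕ) :
    Function.Injective (conflictCode A) :=
  fun _ _ h => Prod.ext (funext fun n => congrArg Prod.fst (congrFun h n))
    (funext fun n => congrArg (·.2.1) (congrFun h n))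

theorem Conflict.exists_forall_cylinder {A : Set (ℕ × β) → Set ℕ} {z z' : Cant × (ℕ → Clopens β)}
    (h : Conflict A z z') :
    ∃ M, ∀ w w', conflictCode A w ∈ cylinder (conflictCode A z) M →
      conflictCode A w' ∈ cylinder (conflictCode A z') M → Conflict A w w' := by
  obtain ⟨h_branch, h_agree, h_ne⟩ := h
  obtain ⟨n, hn⟩ : ∃ n, ¬ (n ∈ A (branchSet z.1 z.2) ∩ A (branchSet z'.1 ⊤) ↔
      n ∈ A (branchSet z'.1 z'.2) ∩ A (branchSet z.1 ⊤)) := by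
    simpa [Set.ext_iff] using h_ne
  set d := firstDiff z.1 z'.1
  refine ⟨max (d + 1) (n + 1), fun w w' hw hw' => ?_⟩
  simp only [mem_cylinder_iff, conflictCode, Prod.mk.injEq, eq_iff_iff] at hw hw'
  have hd : d < max (d + 1) (n + 1) := by simp
  have hn_lt : n < max (d + 1) (n + 1) := by simp
  have hwd : w.1 d ≠ w'.1 d := by
    rw [(hw d hd).1, (hw' d hd).1]
    exact apply_firstDiff_ne h_branch
  have h_diff : firstDiff w.1 w'.1 ≤ d := not_lt.1 fun h => hwd (apply_eq_of_lt_firstDiff h)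
  refine ⟨fun h => hwd (congrFun h d), fun k hk => ?_, fun h => hn ?_⟩
  · have hkd : k < d + 1 := by omega
    have hk_lt : k < max (d + 1) (n + 1) := hkd.trans_le (le_max_left _ _)
    rw [(hw k hk_lt).2.1, (hw' k hk_lt).2.1, h_agree k hkd]
  · obtain ⟨-, -, hwn, hwn_top⟩ := hw n hn_lt
    obtain ⟨-, -, hwn', hwn_top'⟩ := hw' n hn_lt
    rw [mem_inter_iff, mem_inter_iff, ← hwn, ← hwn_top, ← hwn', ← hwn_top']
    exact Set.ext_iff.1 h n

theorem iUnion_branchSet_inter_top {Y : Set (Cant × (ℕ → Clopens β))}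
    (hY : Y.Pairwise fun z z' => z.1 ≠ z'.1 ∧ z'.2 ∈ cylinder z.2 (firstDiff z.1 z'.1 + 1))
    {z : Cant × (ℕ → Clopens β)} (hz : z ∈ Y) :
    (⋃ z' ∈ Y, branchSet z'.1 z'.2) ∩ branchSet z.1 ⊤ = branchSet z.1 z.2 := by
  refine subset_antisymm ?_ (subset_inter (subset_biUnion_of_mem
    (u := fun z' : Cant × (ℕ → Clopens β) => branchSet z'.1 z'.2) hz) (branchSet_subset_top _ _))
  rintro p ⟨hp, hp_top⟩
  obtain ⟨z', hz', hp⟩ := mem_iUnion₂.1 hp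
  obtain ⟨k, hk, -⟩ := mem_columns.1 hp_top
  obtain ⟨k', hk', hpk⟩ := mem_columns.1 hp
  obtain ⟨rfl, hcyl⟩ := branchNode_eq_branchNode_iff.1 (hk.symm.trans hk')
  rcases eq_or_ne z z' with rfl | hne
  · exact hp
  obtain ⟨h_branch, h_agree⟩ := hY hz hz' hne
  have h_eq : z'.2 k = z.2 k := h_agree k <| Nat.lt_succ_of_le <| firstDiff_comm z'.1 z.1 ▸
    (mem_cylinder_iff_le_firstDiff h_branch.symm k).1 hcyl
  exact mem_columns.2 ⟨k, hk, h_eq ▸ hpk⟩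

variable [MeasurableSpace β] [OpensMeasurableSpace β] {μ : Measure (ℕ × β)}
  {A : Set (ℕ × β) → Set ℕ}

theorem IsLifting.countable_of_pairwise_conflict (hA : IsLifting μ A)
    {Y : Set (Cant × (ℕ → Clopens β))} (hY : Y.Pairwise (Conflict A)) : Y.Countable := by
  have measurable_U : MeasurableSet (⋃ z ∈ Y, branchSet z.1 z.2) :=
    (isOpen_biUnion fun z _ => isOpen_branchSet z.1 z.2).measurableSet
  refine countable_of_eventually_mem_iff (a := fun z : Y => A (branchSet z.1.1 z.1.2))
    (b := fun z : Y => A (branchSet z.1.1 ⊤)) (u := A (⋃ z ∈ Y, branchSet z.1 z.2)) (fun z => ?_)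
    fun z z' hne => (hY z.2 z'.2 (Subtype.coe_ne_coe.2 hne)).2.2
  rw [← iUnion_branchSet_inter_top (hY.mono' fun _ _ h => ⟨h.1, h.2.1⟩) z.2]
  exact hA.inter measurable_U (isOpen_branchSet _ _).measurableSet

theorem IsLifting.exists_conflict_free_cover (oca : OCA) [Countable (Clopens β)]
    (hA : IsLifting μ A) : ∃ X : ℕ → Set (Cant × (ℕ → Clopens β)), (⋃ i, X i) = univ ∧
      ∀ i, (X i).Pairwise fun z z' => ¬ Conflict A z z' :=
  oca.exists_iUnion_pairwise_not (conflictCode_injective A) (fun _ _ => Conflict.symm)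
    (fun _ h => h.1 rfl) (fun _ _ => Conflict.exists_forall_cylinder)
    fun _ hY => hA.countable_of_pairwise_conflict hY

end OpenColouring

section RelativelyClopen

/-- The discrete topology, for which `ℕ → Clopens β` carries the product of discrete topologies. -/
local instance instTopologicalSpaceClopens {β : Type*} [TopologicalSpace β] :
    TopologicalSpace (Clopens β) := ⊥

local instance instDiscreteTopologyClopens {β : Type*} [TopologicalSpace β] :
    DiscreteTopology (Clopens β) := ⟨rfl⟩

local instance instCountableClopensCant : Countable (Clopens Cant) :=
  Clopens.countable_iff_secondCountable.2 inferInstance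

namespace IsLifting

section

variable {γ β : Type*} [MeasurableSpace γ] [MeasurableSingletonClass γ] [TopologicalSpace β]
  [MeasurableSpace β] [OpensMeasurableSpace β] {μ : Measure (γ × β)} {A : Set (γ × β) → Set ℕ}
  {c : ℕ → γ} {A' : (ℕ → Clopens β) → Set ℕ} {O : ℕ → Set β}

theorem eventually_mem_sup_iff (hA : IsLifting μ A) (hc : Function.Injective c)
    (hA' : ∀ P, ∀ᶠ n in atTop, n ∈ A' P ↔ n ∈ A (columns c fun k => P k))
    (hO : ∀ k, MeasurableSet (O k)) {V : ℕ → Clopens β} (hV : ∀ k, (V k : Set β) ⊆ O k)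
    (W₁ W₂ : ℕ → Clopens β) :
    ∀ᶠ n in atTop, n ∈ A (columns c fun k => (O k)ᶜ) →
      (n ∈ A' (V ⊔ W₁ ⊔ W₂) ↔ n ∈ A' W₁ ∨ n ∈ A' W₂) := by
  have meas := measurableSet_columns_clopens (β := β) c
  have h_disj : Disjoint (columns c fun k => (O k)ᶜ) (columns c fun k => V k) :=
    disjoint_columns hc fun k => disjoint_compl_left_iff_subset.2 (hV k)
  have h_sup : (columns c fun k => ((V ⊔ W₁ ⊔ W₂) k : Set β)) =
      columns c (fun k => (V k : Set β)) ∪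
        (columns c (fun k => (W₁ k : Set β)) ∪ columns c fun k => (W₂ k : Set β)) := by
    rw [← union_assoc, ← columns_union, ← columns_union]
    rfl
  filter_upwards [hA' (V ⊔ W₁ ⊔ W₂), hA' W₁, hA' W₂, hA.union (meas V) ((meas W₁).union (meas W₂)),
    hA.union (meas W₁) (meas W₂), hA.eventually_notMem_of_disjoint
      (measurableSet_columns fun k => (hO k).compl) (meas V) h_disj]
    with n h_join h₁ h₂ h_union h_union' hnV hn
  rw [h_join, h₁, h₂, h_sup, h_union, h_union']
  exact or_iff_right (hnV hn)

theorem frequently_mem_of_column (hA : IsLifting μ A) (hc : Function.Injective c)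
    (hA' : ∀ P, ∀ᶠ n in atTop, n ∈ A' P ↔ n ∈ A (columns c fun k => P k))
    (hO : ∀ k, MeasurableSet (O k)) {l : ℕ} (hOl : μ ({c l} ×ˢ (O l)ᶜ) ≠ 0)
    {P₁ P₂ U : ℕ → Clopens β} (hP₁ : P₁ l = ⊥) (hP₂ : P₂ l = ⊥) (hU : U l = ⊤) :
    ∃ᶠ n in atTop, n ∈ A (columns c fun k => (O k)ᶜ) ∧ n ∉ A' P₁ ∧ n ∉ A' P₂ ∧ n ∈ A' U := by
  have meas := measurableSet_columns_clopens (β := β) c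
  have measO : MeasurableSet ({c l} ×ˢ (O l)ᶜ) := (measurableSet_singleton _).prod (hO l).compl
  have not_mem {P : ℕ → Clopens β} (hP : P l = ⊥) :
      ∀ᶠ n in atTop, n ∈ A ({c l} ×ˢ (O l)ᶜ) → n ∉ A' P := by
    filter_upwards [hA' P, hA.eventually_notMem_of_disjoint measO (meas P)
      (disjoint_prod_columns hc (by simp [hP]))] with n h_iff hn
    rwa [h_iff]
  refine ((hA.frequently_mem measO hOl).and_eventually ((not_mem hP₁).and ((not_mem hP₂).and
    ((hA' U).and ((hA.eventually_mem_of_subset measO (meas U)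
      (prod_subset_columns (by simp [hU]))).and (hA.eventually_mem_of_subset measO
        (measurableSet_columns fun k => (hO k).compl)
          (prod_subset_columns subset_rfl))))))).mono ?_
  rintro n ⟨hn, hn₁, hn₂, h_iff, hnU, hnO⟩
  exact ⟨hnO hn, hn₁ hn, hn₂ hn, h_iff.2 (hnU hn)⟩

theorem exists_denseAmalgam_and_nonempty (hA : IsLifting μ A) (hc : Function.Injective c)
    (hA' : ∀ P, ∀ᶠ n in atTop, n ∈ A' P ↔ n ∈ A (columns c fun k => P k))
    (hO : ∀ k, MeasurableSet (O k)) (hO_compl : ∀ k, μ ({c k} ×ˢ (O k)ᶜ) ≠ 0)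
    {ι : Type*} [Countable ι] {Y : ι → Set (ℕ → Clopens β)}
    (hY : ∀ᶠ P in residual (ℕ → Clopens β), ∃ i, P ∈ Y i) :
    ∃ i j₁ j₂ n l, ∃ t w₁ w₂ : Fin l → Clopens β,
      DenseAmalgam {V : ℕ → Clopens β | ∀ k, (V k : Set β) ⊆ O k}
        (graft t ⁻¹' Y i) (graft w₁ ⁻¹' Y j₁) (graft w₂ ⁻¹' Y j₂)
        (graft t ⁻¹' {P | n ∈ A' P}) (graft w₁ ⁻¹' {P | n ∈ A' P}) (graft w₂ ⁻¹' {P | n ∈ A' P}) ∧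
      (graft t ⁻¹' Y i ∩ graft t ⁻¹' {P | n ∈ A' P}).Nonempty ∧
      (graft w₁ ⁻¹' Y j₁ \ graft w₁ ⁻¹' {P | n ∈ A' P}).Nonempty ∧
      (graft w₂ ⁻¹' Y j₂ \ graft w₂ ⁻¹' {P | n ∈ A' P}).Nonempty := by
  let 𝒪 (k : ℕ) : Set (Clopens β) := {b | (b : Set β) ⊆ O k}
  have h𝒱 : ⊥ ∈ univ.pi 𝒪 := fun k _ => empty_subset (O k)
  have h_pi : univ.pi 𝒪 = {V : ℕ → Clopens β | ∀ k, (V k : Set β) ⊆ O k} := by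
    ext V
    simp [𝒪]
  obtain ⟨i, j₁, j₂, m, l, t, w₁, w₂, h⟩ := exists_denseAmalgam hY
    (fun k => h𝒱 k trivial) (a := fun n => {P | n ∈ A' P}) fun V hV =>
      hA.eventually_mem_sup_iff hc hA' hO fun k => hV k trivial
  obtain ⟨n₀, ⟨hn₀, -⟩, hn₀m⟩ := ((hA.frequently_mem_of_column hc hA' hO (hO_compl l)
    (P₁ := ⊥) (P₂ := ⊥) (U := ⊤) rfl rfl rfl).and_eventually (eventually_ge_atTop m)).exists
  have h₀ := h n₀ hn₀m hn₀
  obtain ⟨P₁, hP₁, hP₁l⟩ := mem_closure_iff_cylinder.1 (h₀.dense_left ⟨⊥, h𝒱⟩ ⊥) (l + 1)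
  obtain ⟨P₂, hP₂, hP₂l⟩ := mem_closure_iff_cylinder.1 (h₀.dense_right ⟨⊥, h𝒱⟩ ⊥) (l + 1)
  obtain ⟨U, hU, hUl⟩ := mem_closure_iff_cylinder.1 (h₀.dense h𝒱 ⊤) (l + 1)
  have graft_apply {s : Fin l → Clopens β} {P Q : ℕ → Clopens β}
      (hP : P ∈ cylinder Q (l + 1)) : graft s P l = Q l :=
    (graft_of_le s P le_rfl).trans (hP l l.lt_succ_self)
  obtain ⟨n, ⟨hnO, hnP₁, hnP₂, hnU⟩, hnm⟩ := ((hA.frequently_mem_of_column hc hA' hO (hO_compl l)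
    (graft_apply hP₁l) (graft_apply hP₂l) (graft_apply hUl)).and_eventually
      (eventually_ge_atTop m)).exists
  exact ⟨i, j₁, j₂, n, l, t, w₁, w₂, h_pi ▸ h n hnm hnO, ⟨U, hU, hnU⟩, ⟨P₁, hP₁, hnP₁⟩,
    P₂, hP₂, hnP₂⟩

end

theorem not_eventually_residual_of_isClopen {μ : Measure CSp} (hμ : IsMeasureOK μ)
    {A : Set CSp → Set ℕ} (hA : IsLifting μ A) {c : ℕ → ℕ} (hc : Function.Injective c)
    {A' : (ℕ → Clopens Cant) → Set ℕ}
    (hA' : ∀ P, ∀ᶠ n in atTop, n ∈ A' P ↔ n ∈ A (columns c fun k => P k))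
    {ι : Type*} [Countable ι] {Y : ι → Set (ℕ → Clopens Cant)}
    (hY : ∀ i n, IsClopen (Y i ↓∩ {P | n ∈ A' P})) :
    ¬ ∀ᶠ P in residual (ℕ → Clopens Cant), ∃ i, P ∈ Y i := by
  intro hY_residual
  let 𝒢 : ι × ℕ × (Σ l, Fin l → Clopens Cant) → Set (ℕ → Clopens Cant) := fun (i, n, ⟨_, t⟩) =>
    {r | r ∉ closure (graft t ⁻¹' Y i \ graft t ⁻¹' {P | n ∈ A' P})}
  obtain ⟨ε, hε, O, hO, hO_lt, h_absorb⟩ := exists_absorbing_sets (fun k => columnMeasure μ (c k))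
    (f := fun (r : ℕ → Clopens Cant) k => r k) (fun r k => (r k).isOpen.measurableSet) 𝒢 one_ne_zero
  have hO_compl (l : ℕ) : μ ({c l} ×ˢ (O l)ᶜ) ≠ 0 := by
    rw [← columnMeasure_apply]
    intro h_null
    have := hμ.columnMeasure_univ (c l) ▸ measure_congr (ae_eq_univ.2 h_null)
    exact (hO_lt l).ne this
  obtain ⟨i, j₁, j₂, n, l, t, w₁, w₂, h, ⟨U, hU, hnU⟩, ⟨P₁, hP₁⟩, P₂, hP₂⟩ :=
    hA.exists_denseAmalgam_and_nonempty hc hA' hO hO_compl hY_residual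
  have h_bot : ⊥ ∈ {V : ℕ → Clopens Cant | ∀ k, (V k : Set Cant) ⊆ O k} := fun k => empty_subset _
  have clopen (i : ι) (s : Fin l → Clopens Cant) :
      IsClopen ((graft s ⁻¹' Y i) ↓∩ (graft s ⁻¹' {P | n ∈ A' P})) :=
    (hY i n).preimage ((continuous_graft s).restrictPreimage)
  obtain ⟨N, p, hp, hpε⟩ := hμ.exists_fine_clopen_cover (hε (i, n, ⟨l, t⟩))
  obtain ⟨s, hs⟩ := h.exists_inf_notMem_closure_sdiff h_bot (clopen i t) (clopen j₁ w₁).isOpen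
    (clopen j₂ w₂).isOpen hU hnU hp
  obtain ⟨r, hr, hrO⟩ := h_absorb (i, n, ⟨l, t⟩) ⟨_, hs, fun k =>
    (measure_mono inter_subset_right).trans (hpε s (c k))⟩
  exact hr (h.mem_closure_sdiff h_bot (clopen i t) (clopen j₁ w₁) (clopen j₂ w₂) hP₁ hP₂ hrO)

end IsLifting

section Ambiguity

variable {β : Type} [TopologicalSpace β]

/-- The trace of `A (branchSet x P)` on the value of `A` at the largest set over the branch `x`. -/
def branchTrace (A : Set (ℕ × β) → Set ℕ) (x : Cant) (P : ℕ → Clopens β) : Set ℕ :=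
  A (branchSet x P) ∩ A (branchSet x ⊤)

/-- The closed set of sequences near which the section of `X` over `x` does not decide whether `n`
belongs to `branchTrace A x P`. -/
def ambiguousSet (A : Set (ℕ × β) → Set ℕ) (X : Set (Cant × (ℕ → Clopens β))) (x : Cant)
    (n : ℕ) : Set (ℕ → Clopens β) :=
  closure (Prod.mk x ⁻¹' X ∩ {P | n ∈ branchTrace A x P}) ∩
    closure (Prod.mk x ⁻¹' X \ {P | n ∈ branchTrace A x P})

variable {A : Set (ℕ × β) → Set ℕ}

theorem disjoint_ambiguousSet {X : Set (Cant × (ℕ → Clopens β))}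
    (hX : X.Pairwise fun z z' => ¬ Conflict A z z') {x y : Cant} (hxy : x ≠ y) (n : ℕ) :
    Disjoint (ambiguousSet A X x n) (ambiguousSet A X y n) := by
  refine disjoint_left.2 fun P ⟨hx, _⟩ ⟨hy, hy'⟩ => ?_
  set d := firstDiff x y + 1
  obtain ⟨Q, ⟨hQX, hnQ, -⟩, hQ⟩ := mem_closure_iff_cylinder.1 hx d
  obtain ⟨-, ⟨-, -, hny⟩, -⟩ := mem_closure_iff_cylinder.1 hy d
  obtain ⟨R, ⟨hRX, hnR⟩, hR⟩ := mem_closure_iff_cylinder.1 hy' d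
  refine hX hQX hRX (fun h => hxy (congrArg Prod.fst h)) ⟨hxy, ?_, fun h => ?_⟩
  · exact mem_cylinder_iff_eq.1 hQ ▸ hR
  · exact hnR ⟨((Set.ext_iff.1 h n).1 ⟨hnQ, hny⟩).1, hny⟩

theorem exists_forall_isNowhereDense_ambiguousSet [Countable (Clopens β)]
    {X : ℕ → Set (Cant × (ℕ → Clopens β))}
    (hX : ∀ i, (X i).Pairwise fun z z' => ¬ Conflict A z z') :
    ∃ x, ∀ i n, IsNowhereDense (ambiguousSet A (X i) x n) := by
  have h_countable (i n : ℕ) :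
      {x | (interior (ambiguousSet A (X i) x n)).Nonempty}.Countable :=
    Set.PairwiseDisjoint.countable_of_isOpen (s := fun x => interior (ambiguousSet A (X i) x n))
      (fun x _ y _ hxy => (disjoint_ambiguousSet (hX i) hxy n).mono interior_subset interior_subset)
      (fun _ _ => isOpen_interior) fun _ hx => hx
  have : Uncountable Cant := by
    simp [← Cardinal.aleph0_lt_mk_iff, Cardinal.aleph0_lt_continuum]
  obtain ⟨x, hx⟩ := (ne_univ_iff_exists_notMem _).1 fun h => not_countable_univ (α := Cant) <|
    h ▸ countable_iUnion fun i => countable_iUnion (h_countable i)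
  simp only [mem_iUnion, not_exists, mem_ofPred_eq, not_nonempty_iff_eq_empty] at hx
  exact ⟨x, fun i n => (isClosed_closure.inter isClosed_closure).isNowhereDense_iff.2 (hx i n)⟩

end Ambiguity

theorem OCA.not_isLifting (oca : OCA) {μ : Measure CSp} (hμ : IsMeasureOK μ)
    (A : Set CSp → Set ℕ) : ¬ IsLifting μ A := by
  intro hA
  obtain ⟨X, hX, hX_conflict⟩ := hA.exists_conflict_free_cover oca
  obtain ⟨x, hx⟩ := exists_forall_isNowhereDense_ambiguousSet hX_conflict
  let Y (i : ℕ) : Set (ℕ → Clopens Cant) := Prod.mk x ⁻¹' X i \ ⋃ n, ambiguousSet A (X i) x n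
  have h_trace (P : ℕ → Clopens Cant) :
      ∀ᶠ n in atTop, n ∈ branchTrace A x P ↔ n ∈ A (branchSet x P) := by
    filter_upwards [hA.eventually_mem_of_subset (isOpen_branchSet x P).measurableSet
      (isOpen_branchSet x ⊤).measurableSet (branchSet_subset_top x P)] with n hn
    exact and_iff_left_of_imp hn
  refine hA.not_eventually_residual_of_isClopen hμ (branchNode_injective x) h_trace
    (Y := Y) (fun i n => ?_) ?_
  · exact isClopen_preimage_of_disjoint_frontier sdiff_subset
      (disjoint_sdiff_left.mono_right (subset_iUnion (ambiguousSet A (X i) x) n))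
  · have h_avoid : ∀ᶠ P in residual (ℕ → Clopens Cant), ∀ i n, P ∉ ambiguousSet A (X i) x n :=
      eventually_countable_forall.2 fun i =>
        eventually_countable_forall.2 fun n => (hx i n).isMeagre
    filter_upwards [h_avoid] with P hP
    obtain ⟨i, hi⟩ := mem_iUnion.1 (hX ▸ mem_univ (x, P))
    exact ⟨i, hi, fun h => (mem_iUnion.1 h).elim (hP i)⟩

end RelativelyClopen

/-- Main Theorem: OCA implies that the measure algebra `ℳ` cannot be
embedded into `P(ℕ)/fin`. -/
theorem measure_algebra_does_not_embed (oca : OCA)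
    (μ : Measure CSp) (hμ : IsMeasureOK μ) :
    ¬ ∃ φ : MAlg μ → PFin ℕ, IsEmbedding μ φ := by
  rintro ⟨φ, hφ⟩
  obtain ⟨A, hA⟩ := hφ.exists_isLifting
  exact oca.not_isLifting hμ A hA

end Paper
end

section
/- Assume that for every P_{ℵ₁}-ideal ℐ of subsets of a countable set, every coherent family of functions on ℐ with values in ω can be uniformized. Then for every P_{ℵ₁}-ideal ℐ on ω, every coherent family {f_I : I ∈ ℐ} of functions f_I : I → P(ℕ) can be uniformized, where two P(ℕ)-valued functions on a set agree almost everywhere if they take the same value at all but finitely many points of their common domain. -/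
/-!
The functions of a coherent family take, up to finitely many points each, values in one countable
set `Y`; coding `Y` by natural numbers then reduces the claim to `ω`-valued families. If no such `Y`
existed, one could choose, by recursion of length `ω₁`, sets `s i ∈ I` on which infinitely many
values avoid all values taken on the earlier `s j`. An almost-upper bound `J ∈ I` of these `ℵ₁`
sets yields the countable set `F J '' J`, which contains almost all values taken on each `s i`. By
regularity of `ω₁`, those of its elements that are values on some `s i` all occur before some stage
`k`, and this contradicts the choice of `s k`.
-/

open Set MeasureTheory
open scoped ENNReal

namespace Paper

/-- `I` is an ideal of subsets of `C`. -/
def IsSetIdeal {C : Type} (I : Set (Set C)) : Prop :=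
  ∅ ∈ I ∧ (∀ s ∈ I, ∀ t : Set C, t ⊆ s → t ∈ I) ∧ (∀ s ∈ I, ∀ t ∈ I, s ∪ t ∈ I)

/-- `I` is a `P_{ℵ₁}`-ideal: every subfamily of size at most `ℵ₁` has an almost-upper bound
in `I`. -/
def IsPAleph1Ideal {C : Type} (I : Set (Set C)) : Prop :=
  ∀ I' ⊆ I, Cardinal.mk I' ≤ Cardinal.aleph 1 → ∃ J ∈ I, ∀ s ∈ I', (s \ J).Finite

/-- A family of functions `F I : I → β` (coded as total functions, only the values on `I`
matter) is coherent if `I ⊆ J` implies that `F J ↾ I` and `F I` agree at all but finitely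
many points of `I`. -/
def Coherent {C β : Type} (I : Set (Set C)) (F : Set C → C → β) : Prop :=
  ∀ s ∈ I, ∀ t ∈ I, s ⊆ t → {x ∈ s | F t x ≠ F s x}.Finite

/-- The family can be uniformized: there is a single function agreeing with each `F I`
at all but finitely many points of `I`. -/
def Uniformizable {C β : Type} (I : Set (Set C)) (F : Set C → C → β) : Prop :=
  ∃ f : C → β, ∀ s ∈ I, {x ∈ s | f x ≠ F s x}.Finite

section

open Cardinal

theorem exists_forall_eq_apply_image_Iio {ι α : Type*} [Preorder ι] [WellFoundedLT ι]
    (c : Set α → α) : ∃ s : ι → α, ∀ i, s i = c (s '' Iio i) := by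
  refine ⟨WellFoundedLT.fix fun i s ↦ c (range fun j : Iio i ↦ s j j.2), fun i ↦ ?_⟩
  rw [WellFoundedLT.fix_eq, image_eq_range]

universe u

theorem exists_subset_mk_le_forall_subset_mk_lt {α : Type u} {κ : Cardinal.{u}} (hκ : κ.IsRegular)
    {r : Set α → α → Prop} (hr : Antitone r) {I : Set α}
    (h : ∀ A : Set α, #A < κ → ∃ a ∈ I, r A a) :
    ∃ S ⊆ I, #S ≤ κ ∧ ∀ A ⊆ S, #A < κ → ∃ a ∈ S, r A a := by
  have : Nonempty α := (h ∅ (by simpa using hκ.pos)).nonempty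
  choose! c hcI hcr using h
  obtain ⟨s, hs⟩ := exists_forall_eq_apply_image_Iio (ι := κ.ord.ToType) c
  have mk_initial_lt (i : κ.ord.ToType) : #(s '' Iio i) < κ := by
    simpa using mk_image_le.trans_lt (mk_Iio_lt i (by simp))
  refine ⟨range s, ?_, by simpa using mk_range_le (f := s), fun A hA hAκ ↦ ?_⟩
  · rintro _ ⟨i, rfl⟩
    exact hs i ▸ hcI _ (mk_initial_lt i)
  obtain ⟨T, rfl, hT⟩ := exists_image_eq_injOn_of_subset_range hA
  have hT_lt : #T < Order.cof κ.ord.ToType := by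
    rwa [Ordinal.cof_toType, hκ.cof_ord, ← mk_image_eq_of_injOn s T hT]
  obtain ⟨k, hk⟩ := not_isCofinal_iff.1 fun hT_cofinal ↦ (Order.cof_le hT_cofinal).not_gt hT_lt
  have r_initial : r (s '' Iio k) (s k) := hs k ▸ hcr _ (mk_initial_lt k)
  exact ⟨s k, mem_range_self k, hr (image_mono hk) _ r_initial⟩

variable {C β γ : Type} {I : Set (Set C)} {F : Set C → C → β}

theorem IsSetIdeal.isLowerSet (hI : IsSetIdeal I) : IsLowerSet I :=
  fun s t hts hs ↦ hI.2.1 s hs t hts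

/-- The members of the family `F` on `I` take all their values in a single countable set, up to
finitely many points for each member. Such a family can be coded by an `ω`-valued one. -/
def AlmostCountablyValued (I : Set (Set C)) (F : Set C → C → β) : Prop :=
  ∃ Y : Set β, Y.Countable ∧ ∀ s ∈ I, {x ∈ s | F s x ∉ Y}.Finite

theorem AlmostCountablyValued.of_forall_mk_le_aleph_one (hc : ∀ s ∈ I, s.Countable)
    (h : ∀ S ⊆ I, #S ≤ ℵ₁ → AlmostCountablyValued S F) : AlmostCountablyValued I F := by
  by_contra hI
  let values (A : Set (Set C)) : Set β := ⋃ t ∈ A ∩ I, F t '' t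
  let r (A : Set (Set C)) (s : Set C) : Prop := {x ∈ s | F s x ∉ values A}.Infinite
  have values_mono : Monotone values := fun A B hAB ↦
    biUnion_mono (inter_subset_inter_left I hAB) fun _ _ ↦ Subset.rfl
  have r_antitone : Antitone r := fun A B hAB s hs ↦
    hs.mono fun x hx ↦ ⟨hx.1, fun hA ↦ hx.2 (values_mono hAB hA)⟩
  have exists_r (A : Set (Set C)) (hA : #A < ℵ₁) : ∃ s ∈ I, r A s := by
    have values_countable : (values A).Countable :=
      ((le_aleph0_iff_set_countable.1 (lt_aleph_one_iff.1 hA)).mono inter_subset_left).biUnion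
        fun t ht ↦ (hc t ht.2).image (F t)
    by_contra! hfin
    exact hI ⟨values A, values_countable, fun s hs ↦ not_infinite.1 (hfin s hs)⟩
  obtain ⟨S, hSI, hS, hSr⟩ :=
    exists_subset_mk_le_forall_subset_mk_lt isRegular_aleph_one r_antitone exists_r
  obtain ⟨Y, hY, hYfin⟩ := h S hSI hS
  have exists_mem_image (y : β) (hy : y ∈ Y ∩ values S) : ∃ t ∈ S, y ∈ F t '' t := by
    obtain ⟨t, ht, hyt⟩ := mem_iUnion₂.1 hy.2
    exact ⟨t, ht.1, hyt⟩
  choose! t htS hyt using exists_mem_image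
  have image_countable : (t '' (Y ∩ values S)).Countable := (hY.mono inter_subset_left).image t
  obtain ⟨s, hs, hsr⟩ := hSr (t '' (Y ∩ values S)) (image_subset_iff.2 htS)
    (lt_aleph_one_iff.2 (le_aleph0_iff_set_countable.2 image_countable))
  refine hsr ((hYfin s hs).subset fun x ⟨hxs, hx⟩ ↦ ⟨hxs, fun hxY ↦ hx ?_⟩)
  have hxS : F s x ∈ Y ∩ values S :=
    ⟨hxY, mem_biUnion (⟨hs, hSI hs⟩ : s ∈ S ∩ I) (mem_image_of_mem _ hxs)⟩
  exact mem_biUnion ⟨mem_image_of_mem t hxS, hSI (htS _ hxS)⟩ (hyt _ hxS)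

namespace Coherent

theorem finite_inter_ne (hF : Coherent I F) (hI : IsLowerSet I) {s t : Set C} (hs : s ∈ I)
    (ht : t ∈ I) : {x ∈ s ∩ t | F s x ≠ F t x}.Finite := by
  have hst : s ∩ t ∈ I := hI inter_subset_left hs
  refine ((hF _ hst s hs inter_subset_left).union (hF _ hst t ht inter_subset_right)).subset ?_
  rintro x ⟨hx, hne⟩
  by_cases hxs : F s x = F (s ∩ t) x
  · exact .inr ⟨hx, fun hxt ↦ hne (hxs.trans hxt.symm)⟩
  · exact .inl ⟨hx, hxs⟩

theorem finite_notMem_image (hF : Coherent I F) (hI : IsLowerSet I) {s t : Set C} (hs : s ∈ I)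
    (ht : t ∈ I) (hst : (s \ t).Finite) : {x ∈ s | F s x ∉ F t '' t}.Finite := by
  refine (hst.union (hF.finite_inter_ne hI hs ht)).subset ?_
  rintro x ⟨hxs, hx⟩
  by_cases hxt : x ∈ t
  · exact .inr ⟨⟨hxs, hxt⟩, fun heq ↦ hx ⟨x, hxt, heq.symm⟩⟩
  · exact .inl ⟨hxs, hxt⟩

theorem almostCountablyValued (hF : Coherent I F) (hI : IsLowerSet I) (hP : IsPAleph1Ideal I)
    (hc : ∀ s ∈ I, s.Countable) : AlmostCountablyValued I F := by
  refine .of_forall_mk_le_aleph_one hc fun S hSI hS ↦ ?_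
  obtain ⟨J, hJ, hSJ⟩ := hP S hSI hS
  exact ⟨F J '' J, (hc J hJ).image (F J),
    fun s hs ↦ hF.finite_notMem_image hI (hSI hs) hJ (hSJ s hs)⟩

theorem comp (hF : Coherent I F) (g : β → γ) : Coherent I fun s x ↦ g (F s x) :=
  fun s hs t ht hst ↦ (hF s hs t ht hst).subset fun _ hx ↦ ⟨hx.1, fun heq ↦ hx.2 (congrArg g heq)⟩

end Coherent

theorem AlmostCountablyValued.uniformizable (hF : AlmostCountablyValued I F)
    (H : ∀ e : β → ℕ, Uniformizable I fun s x ↦ e (F s x)) : Uniformizable I F := by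
  obtain ⟨Y, hY, hYfin⟩ := hF
  obtain ⟨e, he⟩ := countable_iff_exists_injOn.1 hY
  obtain ⟨f, hf⟩ := H e
  have nonempty_of_point (x : C) : Nonempty β := ⟨F ∅ x⟩
  refine ⟨fun x ↦ have := nonempty_of_point x; Function.invFunOn e Y (f x), fun s hs ↦ ?_⟩
  refine ((hf s hs).union (hYfin s hs)).subset ?_
  rintro x ⟨hxs, hne⟩
  by_cases hxY : F s x ∈ Y
  · have := nonempty_of_point x
    refine .inl ⟨hxs, fun heq ↦ hne ?_⟩
    exact (congrArg (Function.invFunOn e Y) heq).trans (he.leftInvOn_invFunOn hxY)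
  · exact .inr ⟨hxs, hxY⟩

theorem uniformization_for_powerset_valued_families_general
    (H : ∀ G : Set C → C → ℕ, Coherent I G → Uniformizable I G)
    (hI : IsLowerSet I) (hc : ∀ s ∈ I, s.Countable) (hP : IsPAleph1Ideal I) (hF : Coherent I F) :
    Uniformizable I F :=
  (hF.almostCountablyValued hI hP hc).uniformizable fun e ↦ H _ (hF.comp e)

end

/-- if every coherent family of `ω`-valued functions on a `P_{ℵ₁}`-ideal on a
countable set can be uniformized, then every coherent family of `P(ℕ)`-valued functions on a
`P_{ℵ₁}`-ideal on `ω` can be uniformized. -/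
theorem uniformization_for_powerset_valued_families
    (H : ∀ (C : Type) [Countable C] (I : Set (Set C)), IsSetIdeal I → IsPAleph1Ideal I →
      ∀ F : Set C → C → ℕ, Coherent I F → Uniformizable I F)
    (I : Set (Set ℕ)) (hI : IsSetIdeal I) (hP : IsPAleph1Ideal I)
    (F : Set ℕ → ℕ → Set ℕ) (hF : Coherent I F) :
    Uniformizable I F := by
  exact uniformization_for_powerset_valued_families_general (H ℕ I hI hP) hI.isLowerSet
    (fun s _ ↦ s.to_countable) hP hF

end Paper
end
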